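/- arXiv:1501.04008 — 2 statements merged into one kernel-verified Lean document; each statement's English description precedes it below -/
import Mathlib

section
/- Let D = (Δ, 𝒟) be a Swiss cheese with δ(D) > 0 such that the associated Swiss cheese set X_D has empty interior in ℂ. Then X_D contains a subset homeomorphic to the Sierpiński carpet. -/
/-- An open disc in the complex plane: a set of the form `B(z,r)` with `r > 0`. -/
def IsOpenDisc (D : Set ℂ) : Prop := ∃ z : ℂ, ∃ r : ℝ, 0 < r ∧ D = Metric.ball z r

/-- A closed disc in the complex plane: `{w : |w - z| ≤ r}` with `r > 0`. -/
def IsClosedDisc (D : Set ℂ) : Prop := ∃ z : ℂ, ∃ r : ℝ, 0 < r ∧ D = Metric.closedBall z r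

/-- The radius of a disc, computed as half its diameter (so `r = 0` for `∅` or singletons). -/
noncomputable def discRadius (D : Set ℂ) : ℝ := Metric.diam D / 2

/-- A Swiss cheese: a closed disc `Δ` together with a countable collection `𝒟` of open discs. -/
structure SwissCheese where
  Δ : Set ℂ
  𝒟 : Set (Set ℂ)
  hΔ : IsClosedDisc Δ
  h𝒟 : ∀ D ∈ 𝒟, IsOpenDisc D
  hcount : 𝒟.Countable

/-- `D̃ = 𝒟 ∪ {ℂ ∖ Δ}`. -/
def SwissCheese.tilde (D : SwissCheese) : Set (Set ℂ) := D.𝒟 ∪ {D.Δᶜ}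

/-- The associated Swiss cheese set `X_D = Δ ∖ ⋃ 𝒟`. -/
def SwissCheese.X (D : SwissCheese) : Set ℂ := D.Δ \ ⋃₀ D.𝒟

/-- The (possibly infinite) sum of the radii of a collection of discs. -/
noncomputable def radSum (S : Set (Set ℂ)) : ENNReal :=
  ∑' D : S, ENNReal.ofReal (discRadius D)

/-- `δ(D) = r(Δ) − Σ_{D'∈𝒟} r(D')`, possibly `−∞`. -/
noncomputable def SwissCheese.delta (D : SwissCheese) : EReal :=
  (discRadius D.Δ : EReal) - ((radSum D.𝒟 : ENNReal) : EReal)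

/-- An allocation map between Swiss cheeses. -/
structure IsAllocationMap (D E : SwissCheese) (f : Set ℂ → Set ℂ) : Prop where
  maps_to : ∀ U ∈ D.tilde, f U ∈ E.tilde
  a1 : ∀ U ∈ D.tilde, U ⊆ f U
  a2 : ENNReal.ofReal (discRadius D.Δ - discRadius E.Δ) ≤
      radSum {U | U ∈ D.𝒟 ∧ f U = E.Δᶜ}
  a3 : ∀ E' ∈ E.𝒟, ENNReal.ofReal (discRadius E') ≤ radSum {U | U ∈ D.𝒟 ∧ f U = E'}

/-- The unit square `Q = [0,1]²` viewed in `ℂ`. -/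
def unitSquare : Set ℂ := {z | z.re ∈ Set.Icc (0 : ℝ) 1 ∧ z.im ∈ Set.Icc (0 : ℝ) 1}

/-- The open square with lower-left corner `a` and side `l`. -/
def openSquare (a : ℂ) (l : ℝ) : Set ℂ :=
  {w | w.re ∈ Set.Ioo a.re (a.re + l) ∧ w.im ∈ Set.Ioo a.im (a.im + l)}

/-- The Sierpiński carpet. -/
def sierpinskiCarpet : Set ℂ :=
  unitSquare \ ⋃ (k : ℕ) (m : Fin (3 ^ k)) (n : Fin (3 ^ k)),
    openSquare
      ((((3 : ℝ) ^ (k + 1))⁻¹ : ℝ) * (((3 * (m : ℕ) + 1 : ℕ) : ℂ) +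
        ((3 * (n : ℕ) + 1 : ℕ) : ℂ) * Complex.I))
      (((3 : ℝ) ^ (k + 1))⁻¹)

/-! The idea is to pull the plane apart. For sites `y j` the map
`T x = x + ∑ r j • (x - y j) / ‖x - y j‖` is a subgradient of the strongly convex function
`φ x = ‖x‖ ^ 2 / 2 + ∑ r j * ‖x - y j‖`. Hence `T` does not decrease distances, it is continuous off
the sites, it moves no point by more than `∑ r j`, and it opens at each site a hole, the set of
subgradients of `φ` there, which contains a disc of radius `r j`. If the sites minimise
`∑ r i * (‖y i‖ ^ 2 / 2 - ⟪c i, y i⟫) + (1 / 2) * ∑ r i * r j * ‖y i - y j‖` over the ball of radius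
`δ = r(Δ) - ∑ r j`, then minimality in the `i`-th variable says that the hole at `y i` contains the
prescribed disc with centre `c i` and radius `r i`. So `T` embeds into the Swiss cheese set every
compact subset of the `δ`-ball that misses the sites, and by Baire's theorem a small translated copy
of a compact set with empty interior misses these countably many points. -/

open Set Metric Function NormedSpace Filter
open scoped Topology RealInnerProductSpace

section Normalize

variable {E : Type*} [NormedAddCommGroup E]

lemma norm_normalize_le_one [NormedSpace ℝ E] (x : E) : ‖normalize x‖ ≤ 1 := by
  obtain rfl | hx := eq_or_ne x 0
  · simp
  · exact (norm_normalize hx).le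

lemma norm_smul_normalize_le [NormedSpace ℝ E] {a : ℝ} (ha : 0 ≤ a) (x : E) :
    ‖a • normalize x‖ ≤ a := by
  rw [norm_smul, Real.norm_of_nonneg ha]
  exact mul_le_of_le_one_right ha (norm_normalize_le_one x)

lemma continuousAt_normalize [NormedSpace ℝ E] {x : E} (hx : x ≠ 0) :
    ContinuousAt (normalize : E → E) x :=
  (continuousAt_id.norm.inv₀ (norm_ne_zero_iff.mpr hx)).smul continuousAt_id

lemma inner_normalize_self [InnerProductSpace ℝ E] (x : E) : ⟪normalize x, x⟫ = ‖x‖ := by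
  rw [NormedSpace.normalize, real_inner_smul_left, real_inner_self_eq_norm_mul_norm,
    ← mul_assoc, inv_mul_mul_self]

lemma norm_add_inner_normalize_le [InnerProductSpace ℝ E] (x u : E) :
    ‖x‖ + ⟪normalize x, u - x⟫ ≤ ‖u‖ := by
  rw [inner_sub_right, inner_normalize_self, add_sub_cancel]
  calc ⟪normalize x, u⟫ ≤ ‖normalize x‖ * ‖u‖ := real_inner_le_norm _ _
    _ ≤ ‖u‖ := mul_le_of_le_one_left (norm_nonneg u) (norm_normalize_le_one x)

end Normalize

section DistPotential

variable {ι E : Type*} [NormedAddCommGroup E] {r : ι → ℝ} {y : ι → E} {M : ℝ}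

/-- The distance potential `x ↦ ∑ r j ‖x - y j‖` of masses `r j` placed at the points `y j`. -/
noncomputable def distPotential (r : ι → ℝ) (y : ι → E) (x : E) : ℝ :=
  ∑' j, r j * ‖x - y j‖

lemma mul_norm_sub_le {a A : ℝ} {x v : E} (ha : 0 ≤ a) (hx : ‖x‖ ≤ A) (hv : ‖v‖ ≤ M) :
    a * ‖x - v‖ ≤ a * (A + M) :=
  mul_le_mul_of_nonneg_left ((norm_sub_le x v).trans (add_le_add hx hv)) ha

lemma summable_mul_norm_sub (hr : ∀ i, 0 ≤ r i) (hs : Summable r) (hy : ∀ i, ‖y i‖ ≤ M) (x : E) :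
    Summable fun j => r j * ‖x - y j‖ :=
  .of_nonneg_of_le (fun j => mul_nonneg (hr j) (norm_nonneg _))
    (fun j => mul_norm_sub_le (hr j) le_rfl (hy j)) (hs.mul_right (‖x‖ + M))

lemma distPotential_nonneg (hr : ∀ i, 0 ≤ r i) (y : ι → E) (x : E) : 0 ≤ distPotential r y x :=
  tsum_nonneg fun j => mul_nonneg (hr j) (norm_nonneg _)

lemma distPotential_le (hr : ∀ i, 0 ≤ r i) (hs : Summable r) (hy : ∀ i, ‖y i‖ ≤ M) (x : E) :
    distPotential r y x ≤ (∑' j, r j) * (‖x‖ + M) := by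
  rw [← tsum_mul_right]
  exact (summable_mul_norm_sub hr hs hy x).tsum_le_tsum
    (fun j => mul_norm_sub_le (hr j) le_rfl (hy j)) (hs.mul_right _)

lemma tsum_apply_update {ι α G : Type*} [DecidableEq ι] [AddCommGroup G] [TopologicalSpace G]
    [IsTopologicalAddGroup G] [T2Space G] {F : ι → α → G} {f : ι → α}
    (hF : Summable fun k => F k (f k)) (i : ι) (a : α) :
    ∑' k, F k (update f i a k) = F i a - F i (f i) + ∑' k, F k (f k) := by
  simpa only [apply_update] using (hF.hasSum.update i (F i a)).tsum_eq

lemma distPotential_update [DecidableEq ι] (hr : ∀ i, 0 ≤ r i) (hs : Summable r)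
    (hy : ∀ i, ‖y i‖ ≤ M) (i : ι) (u x : E) :
    distPotential r (update y i u) x = distPotential r y x + r i * (‖x - u‖ - ‖x - y i‖) := by
  rw [distPotential, tsum_apply_update (F := fun j v => r j * ‖x - v‖)
    (summable_mul_norm_sub hr hs hy x), distPotential]
  ring

end DistPotential

section PushMap

variable {ι E : Type*} [NormedAddCommGroup E] {r : ι → ℝ} {y : ι → E} {M : ℝ}

/-- The strongly convex function `x ↦ ‖x‖ ^ 2 / 2 + distPotential r y x`, of which `pushMap r y`
selects a subgradient. -/
noncomputable def pushPotential (r : ι → ℝ) (y : ι → E) (x : E) : ℝ :=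
  ‖x‖ ^ 2 / 2 + distPotential r y x

/-- The map pushing every point away from each site `y j` by the distance `r j`. At the sites
themselves `normalize 0 = 0` chooses one of many subgradients, and the map is discontinuous
there. -/
noncomputable def pushMap [NormedSpace ℝ E] (r : ι → ℝ) (y : ι → E) (x : E) : E :=
  x + ∑' j, r j • normalize (x - y j)

lemma norm_pushMap_le [NormedSpace ℝ E] (hr : ∀ i, 0 ≤ r i) (hs : Summable r) (y : ι → E) (x : E) :
    ‖pushMap r y x‖ ≤ ‖x‖ + ∑' j, r j :=
  (norm_add_le _ _).trans <| by
    gcongr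
    exact tsum_of_norm_bounded hs.hasSum fun j => norm_smul_normalize_le (hr j) _

lemma continuousOn_pushMap [NormedSpace ℝ E] [CompleteSpace E] (hr : ∀ i, 0 ≤ r i) (hs : Summable r)
    (y : ι → E) : ContinuousOn (pushMap r y) (range y)ᶜ := by
  refine continuousOn_id.add (continuousOn_tsum (fun j x hx => ?_) hs
    fun j x _ => norm_smul_normalize_le (hr j) _)
  have hxj : x - y j ≠ 0 := sub_ne_zero.mpr fun h => hx ⟨j, h.symm⟩
  have hcont : ContinuousAt (fun x => normalize (x - y j)) x :=
    ContinuousAt.comp (f := fun x => x - y j) (continuousAt_normalize hxj) (by fun_prop)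
  exact (hcont.const_smul (r j)).continuousWithinAt

variable [InnerProductSpace ℝ E] [CompleteSpace E]

lemma distPotential_add_inner_le (hr : ∀ i, 0 ≤ r i) (hs : Summable r) (hy : ∀ i, ‖y i‖ ≤ M)
    (x u : E) :
    distPotential r y x + ⟪∑' j, r j • normalize (x - y j), u - x⟫ ≤ distPotential r y u := by
  have hdir : Summable fun j => r j • normalize (x - y j) :=
    .of_norm_bounded hs fun j => norm_smul_normalize_le (hr j) _
  have hinner : HasSum (fun j => ⟪r j • normalize (x - y j), u - x⟫)
      ⟪∑' j, r j • normalize (x - y j), u - x⟫ := by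
    simpa only [innerSL_apply_apply, real_inner_comm (u - x)] using
      hdir.hasSum.mapL (innerSL ℝ (u - x))
  refine hasSum_le (fun j => ?_) ((summable_mul_norm_sub hr hs hy x).hasSum.add hinner)
    (summable_mul_norm_sub hr hs hy u).hasSum
  rw [real_inner_smul_left, ← mul_add, ← sub_sub_sub_cancel_right u x (y j)]
  exact mul_le_mul_of_nonneg_left (norm_add_inner_normalize_le _ _) (hr j)

lemma pushPotential_add_inner_add_le (hr : ∀ i, 0 ≤ r i) (hs : Summable r)
    (hy : ∀ i, ‖y i‖ ≤ M) (x u : E) :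
    pushPotential r y x + ⟪pushMap r y x, u - x⟫ + ‖u - x‖ ^ 2 / 2 ≤ pushPotential r y u := by
  have hsq : ‖u‖ ^ 2 = ‖x‖ ^ 2 + 2 * ⟪x, u - x⟫ + ‖u - x‖ ^ 2 := by
    rw [← norm_add_sq_real, add_sub_cancel]
  rw [pushPotential, pushPotential, pushMap, inner_add_left]
  linarith [distPotential_add_inner_le hr hs hy x u]

lemma antilipschitzWith_pushMap (hr : ∀ i, 0 ≤ r i) (hs : Summable r) (hy : ∀ i, ‖y i‖ ≤ M) :
    AntilipschitzWith 1 (pushMap r y) := by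
  refine .of_le_mul_dist fun x u => ?_
  rw [NNReal.coe_one, one_mul, dist_eq_norm, dist_eq_norm]
  have hmono : ‖x - u‖ ^ 2 ≤ ⟪pushMap r y x - pushMap r y u, x - u⟫ := by
    have hxu := pushPotential_add_inner_add_le hr hs hy x u
    have hux := pushPotential_add_inner_add_le hr hs hy u x
    rw [← neg_sub x u, inner_neg_right, norm_neg] at hxu
    rw [inner_sub_left]
    linarith
  have hcs := real_inner_le_norm (pushMap r y x - pushMap r y u) (x - u)
  refine le_of_not_gt fun hlt => ?_
  nlinarith [norm_nonneg (pushMap r y x - pushMap r y u)]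

end PushMap

section Equilibrium

variable {ι E : Type*} [NormedAddCommGroup E] [InnerProductSpace ℝ E] {r : ι → ℝ} {c y : ι → E}
  {C M : ℝ}

/-- The part of the energy of the system of sites `y` that depends on the position `u` of site `i`,
divided by `r i`; the last term removes the contribution of `y i` itself to the potential. -/
noncomputable def siteEnergy (r : ι → ℝ) (c y : ι → E) (i : ι) (u : E) : ℝ :=
  pushPotential r y u - ⟪c i, u⟫ - r i * ‖u - y i‖

/-- The energy of sites `y i` of mass `r i` in the external potentials `‖v‖ ^ 2 / 2 - ⟪c i, v⟫`,
with the pair interaction `r i * r j * ‖y i - y j‖` counted once for every unordered pair. -/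
noncomputable def systemEnergy (r : ι → ℝ) (c y : ι → E) : ℝ :=
  ∑' i, r i * (‖y i‖ ^ 2 / 2 - ⟪c i, y i⟫ + distPotential r y (y i) / 2)

lemma norm_systemEnergy_summand_le (hr : ∀ i, 0 ≤ r i) (hs : Summable r) (hc : ∀ i, ‖c i‖ ≤ C)
    (hy : ∀ i, ‖y i‖ ≤ M) (i : ι) :
    ‖r i * (‖y i‖ ^ 2 / 2 - ⟪c i, y i⟫ + distPotential r y (y i) / 2)‖
      ≤ r i * (M ^ 2 / 2 + C * M + (∑' j, r j) * (M + M) / 2) := by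
  have hinner : |⟪c i, y i⟫| ≤ C * M :=
    (abs_real_inner_le_norm _ _).trans
      (mul_le_mul (hc i) (hy i) (norm_nonneg _) ((norm_nonneg _).trans (hc i)))
  have hsq : ‖y i‖ ^ 2 ≤ M ^ 2 := pow_le_pow_left₀ (norm_nonneg _) (hy i) 2
  have hpot : distPotential r y (y i) ≤ (∑' j, r j) * (M + M) :=
    (distPotential_le hr hs hy _).trans (by gcongr; exacts [tsum_nonneg hr, hy i])
  rw [norm_mul, Real.norm_of_nonneg (hr i)]
  refine mul_le_mul_of_nonneg_left ?_ (hr i)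
  rw [Real.norm_eq_abs, abs_le]
  constructor <;>
    linarith [abs_le.mp hinner, sq_nonneg ‖y i‖, distPotential_nonneg hr y (y i)]

lemma systemEnergy_update [DecidableEq ι] (hr : ∀ i, 0 ≤ r i) (hs : Summable r)
    (hc : ∀ i, ‖c i‖ ≤ C) (hy : ∀ i, ‖y i‖ ≤ M) (i : ι) (u : E) :
    systemEnergy r c (update y i u) =
      systemEnergy r c y + r i * (siteEnergy r c y i u - siteEnergy r c y i (y i)) := by
  set F : ι → E → ℝ := fun k v =>
    r k * (‖v‖ ^ 2 / 2 - ⟪c k, v⟫ + distPotential r (update y i u) v / 2)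
  have hself : Summable fun k =>
      r k * (‖y k‖ ^ 2 / 2 - ⟪c k, y k⟫ + distPotential r y (y k) / 2) :=
    .of_norm_bounded (hs.mul_right _) (norm_systemEnergy_summand_le hr hs hc hy)
  have hdiff : HasSum (fun k => r i / 2 * (r k * ‖u - y k‖ - r k * ‖y i - y k‖))
      (r i / 2 * (distPotential r y u - distPotential r y (y i))) :=
    ((summable_mul_norm_sub hr hs hy u).hasSum.sub
      (summable_mul_norm_sub hr hs hy (y i)).hasSum).mul_left _
  have hF : HasSum (fun k => F k (y k))
      (systemEnergy r c y + r i / 2 * (distPotential r y u - distPotential r y (y i))) := by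
    refine (hself.hasSum.add hdiff).congr_fun fun k => ?_
    simp only [F, distPotential_update hr hs hy, norm_sub_rev (y k)]
    ring
  calc systemEnergy r c (update y i u) = ∑' k, F k (update y i u k) := rfl
    _ = F i u - F i (y i) + ∑' k, F k (y k) := tsum_apply_update hF.summable i u
    _ = systemEnergy r c y + r i * (siteEnergy r c y i u - siteEnergy r c y i (y i)) := by
      rw [hF.tsum_eq]
      simp only [F, siteEnergy, pushPotential, distPotential_update hr hs hy, sub_self, norm_zero,
        norm_sub_rev (y i) u]
      ring

lemma continuousOn_systemEnergy (hr : ∀ i, 0 ≤ r i) (hs : Summable r) (hc : ∀ i, ‖c i‖ ≤ C) :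
    ContinuousOn (systemEnergy r c) (univ.pi fun _ => closedBall 0 M) := by
  have hmem : ∀ {y : ι → E}, y ∈ univ.pi (fun _ => closedBall 0 M) → ∀ i, ‖y i‖ ≤ M :=
    fun hy i => mem_closedBall_zero_iff.mp (hy i (mem_univ i))
  refine continuousOn_tsum (fun i => ?_) (hs.mul_right _)
    fun i y hy => norm_systemEnergy_summand_le hr hs hc (hmem hy) i
  have hpot : ContinuousOn (fun y : ι → E => distPotential r y (y i))
      (univ.pi fun _ => closedBall 0 M) := by
    refine continuousOn_tsum (fun j => by fun_prop) (hs.mul_right (M + M)) fun j y hy => ?_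
    rw [norm_mul, norm_norm, Real.norm_of_nonneg (hr j)]
    exact mul_norm_sub_le (hr j) (hmem hy i) (hmem hy j)
  fun_prop

lemma exists_forall_isMinOn_siteEnergy [ProperSpace E] (hr : ∀ i, 0 < r i) (hs : Summable r)
    (hc : ∀ i, ‖c i‖ ≤ C) (hM : 0 ≤ M) :
    ∃ y : ι → E, (∀ i, ‖y i‖ ≤ M) ∧
      ∀ i, IsMinOn (siteEnergy r c y i) (closedBall 0 M) (y i) := by
  classical
  have hr' : ∀ i, 0 ≤ r i := fun i => (hr i).le
  obtain ⟨y, hy, hmin⟩ :=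
    (isCompact_univ_pi fun _ : ι => isCompact_closedBall (0 : E) M).exists_isMinOn
      ⟨0, fun _ _ => mem_closedBall_self hM⟩ (continuousOn_systemEnergy hr' hs hc)
  have hyM : ∀ i, ‖y i‖ ≤ M := fun i => mem_closedBall_zero_iff.mp (hy i (mem_univ i))
  refine ⟨y, hyM, fun i u hu => ?_⟩
  have hle : systemEnergy r c y ≤ systemEnergy r c (update y i u) :=
    hmin ((update_mem_pi_iff_of_mem hy).mpr fun _ => hu)
  rw [systemEnergy_update hr' hs hc hyM, le_add_iff_nonneg_right] at hle
  exact sub_nonneg.mp (nonneg_of_mul_nonneg_right hle (hr i))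

lemma lt_norm_pushMap_sub [CompleteSpace E] (hr : ∀ i, 0 ≤ r i) (hs : Summable r)
    (hy : ∀ i, ‖y i‖ ≤ M) {i : ι} (hmin : IsMinOn (siteEnergy r c y i) (closedBall 0 M) (y i))
    {x : E} (hx : ‖x‖ ≤ M) (hxi : x ≠ y i) : r i < ‖pushMap r y x - c i‖ := by
  have hpos : 0 < ‖x - y i‖ := norm_pos_iff.mpr (sub_ne_zero.mpr hxi)
  have hconv := pushPotential_add_inner_add_le hr hs hy x (y i)
  have hsite : siteEnergy r c y i (y i) ≤ siteEnergy r c y i x :=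
    hmin (mem_closedBall_zero_iff.mpr hx)
  have hinner : (r i + ‖x - y i‖ / 2) * ‖x - y i‖ ≤ ⟪pushMap r y x - c i, x - y i⟫ := by
    rw [← neg_sub x (y i), inner_neg_right, norm_neg] at hconv
    simp only [siteEnergy, sub_self, norm_zero] at hsite
    rw [inner_sub_left, inner_sub_right (c i)]
    linarith
  have hle := le_of_mul_le_mul_right (hinner.trans (real_inner_le_norm _ _)) hpos
  linarith

end Equilibrium

section Placement

lemma dense_setOf_forall_add_notMem {G : Type*} [TopologicalSpace G] [AddGroup G]
    [IsTopologicalAddGroup G] [BaireSpace G] {A Y : Set G} (hA : IsClosed A)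
    (hAint : interior A = ∅) (hY : Y.Countable) : Dense {t : G | ∀ a ∈ A, t + a ∉ Y} := by
  have hdense : Dense (⋂ p ∈ Y, {t : G | -t + p ∉ A}) := by
    refine dense_biInter_of_isOpen (fun p _ => ?_) hY fun p _ => ?_
    · exact hA.isOpen_compl.preimage (by fun_prop)
    · let e : G ≃ₜ G := (Homeomorph.neg G).trans (Homeomorph.addRight p)
      exact (interior_eq_empty_iff_dense_compl.mp hAint).preimage e.isOpenMap
  refine hdense.mono fun t ht a ha hta => ?_
  exact mem_iInter₂.mp ht _ hta (by rwa [neg_add_cancel_left])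

lemma exists_forall_add_smul_mem_ball_diff {E : Type*} [NormedAddCommGroup E] [NormedSpace ℝ E]
    [CompleteSpace E] {K Y : Set E} (hK : IsCompact K) (hKint : interior K = ∅)
    (hY : Y.Countable) {ε : ℝ} (hε : 0 < ε) :
    ∃ (t : E) (l : ℝ), l ≠ 0 ∧ ∀ x ∈ K, t + l • x ∈ ball 0 ε \ Y := by
  obtain ⟨B, hB, hKB⟩ := hK.isBounded.exists_pos_norm_le
  set l := ε / (2 * B)
  have hl : 0 < l := by positivity
  have hdense := dense_setOf_forall_add_notMem (hK.smul l).isClosed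
    (by rw [interior_smul₀ hl.ne', hKint, smul_set_empty]) hY
  obtain ⟨t, htY, ht⟩ := hdense.exists_dist_lt 0 (half_pos hε)
  rw [dist_zero_left] at ht
  refine ⟨t, l, hl.ne', fun x hx => ⟨mem_ball_zero_iff.mpr ?_, htY _ (smul_mem_smul_set hx)⟩⟩
  calc ‖t + l • x‖ ≤ ‖t‖ + l * ‖x‖ := by
        simpa only [norm_smul, Real.norm_of_nonneg hl.le] using norm_add_le t (l • x)
    _ ≤ ‖t‖ + l * B := by gcongr; exact hKB x hx
    _ = ‖t‖ + ε / 2 := by simp only [l]; field_simp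
    _ < ε := by linarith

lemma nonempty_homeomorph_image {X Y : Type*} [TopologicalSpace X] [TopologicalSpace Y] [T2Space Y]
    {K : Set X} {f : X → Y} (hK : IsCompact K) (hf : ContinuousOn f K) (hinj : InjOn f K) :
    Nonempty (f '' K ≃ₜ K) := by
  have : CompactSpace K := isCompact_iff_compactSpace.mp hK
  have hcont : Continuous (Equiv.Set.imageOfInjOn f K hinj) :=
    hf.domRestrict.subtype_mk fun x => mem_image_of_mem f x.2
  exact ⟨hcont.homeoOfEquivCompactToT2.symm⟩

end Placement

section BallRemoval

variable {ι E : Type*} [NormedAddCommGroup E] [InnerProductSpace ℝ E] [ProperSpace E]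
  {K : Set E} {c : ι → E} {r : ι → ℝ}

lemma exists_injOn_mapsTo_closedBall_zero_diff (hK : IsCompact K) (hKint : interior K = ∅)
    (hr : ∀ i, 0 < r i) (hs : Summable r) {C : ℝ} (hc : ∀ i, ‖c i‖ ≤ C) {R : ℝ}
    (hR : ∑' i, r i < R) :
    ∃ f : E → E, ContinuousOn f K ∧ InjOn f K ∧
      MapsTo f K (closedBall 0 R \ ⋃ i, closedBall (c i) (r i)) := by
  have hr' : ∀ i, 0 ≤ r i := fun i => (hr i).le
  have hε : 0 < R - ∑' i, r i := sub_pos.mpr hR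
  obtain ⟨y, hy, hmin⟩ := exists_forall_isMinOn_siteEnergy hr hs hc hε.le
  have hcount : (range y).Countable := by
    have : Countable ι :=
      countable_univ_iff.mp (hs.countable_support.mono fun i _ => (hr i).ne')
    exact countable_range y
  obtain ⟨t, l, hl, hplace⟩ := exists_forall_add_smul_mem_ball_diff hK hKint hcount hε
  refine ⟨fun x => pushMap r y (t + l • x), ?_, ?_, fun x hx => ⟨?_, ?_⟩⟩
  · exact (continuousOn_pushMap hr' hs y).comp (by fun_prop) fun x hx => (hplace x hx).2
  · exact ((antilipschitzWith_pushMap hr' hs hy).injective.comp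
      ((add_right_injective t).comp (smul_right_injective E hl))).injOn
  all_goals have hnorm := mem_ball_zero_iff.mp (hplace x hx).1
  · rw [mem_closedBall_zero_iff]
    linarith [norm_pushMap_le hr' hs y (t + l • x)]
  · simp only [mem_iUnion, mem_closedBall, dist_eq_norm, not_exists, not_le]
    exact fun i => lt_norm_pushMap_sub hr' hs hy (hmin i) hnorm.le
      fun h => (hplace x hx).2 ⟨i, h.symm⟩

theorem exists_homeomorph_subset_closedBall_diff (hK : IsCompact K) (hKint : interior K = ∅)
    (hr : ∀ i, 0 < r i) (hs : Summable r) (z : E) {R : ℝ} (hR : ∑' i, r i < R) :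
    ∃ S ⊆ closedBall z R \ ⋃ i, closedBall (c i) (r i), Nonempty (S ≃ₜ K) := by
  have hr' : ∀ i, 0 ≤ r i := fun i => (hr i).le
  -- Balls with far centres miss `closedBall z R`; dropping them makes the centres bounded.
  set near : Set ι := {i | ‖c i - z‖ ≤ 2 * R}
  obtain ⟨f, hf, hinj, hmaps⟩ := exists_injOn_mapsTo_closedBall_zero_diff hK hKint
    (c := fun i : near => c i - z) (fun i => hr i) (hs.subtype near) (fun i => i.2)
    ((hs.tsum_subtype_le r near hr').trans_lt hR)
  refine ⟨(fun x => z + f x) '' K, ?_, nonempty_homeomorph_image hK (by fun_prop)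
    fun x hx u hu h => hinj hx hu (add_left_cancel h)⟩
  rintro _ ⟨x, hx, rfl⟩
  have hball : ‖f x‖ ≤ R := mem_closedBall_zero_iff.mp (hmaps hx).1
  refine ⟨by simpa [dist_eq_norm] using hball, fun hmem => ?_⟩
  obtain ⟨i, hi⟩ := mem_iUnion.mp hmem
  have hi' : ‖f x - (c i - z)‖ ≤ r i := by
    rwa [sub_sub_eq_add_sub, add_comm, ← dist_eq_norm]
  by_cases hnear : i ∈ near
  · exact (hmaps hx).2 (mem_iUnion.mpr ⟨⟨i, hnear⟩, mem_closedBall_iff_norm.mpr hi'⟩)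
  · have hfar : 2 * R < ‖c i - z‖ := not_le.mp hnear
    have hri : r i ≤ ∑' j, r j := hs.le_tsum i fun j _ => hr' j
    linarith [norm_le_norm_add_norm_sub (f x) (c i - z)]

end BallRemoval

section Radii

lemma discRadius_ball (z : ℂ) {r : ℝ} (hr : 0 ≤ r) : discRadius (ball z r) = r := by
  rw [discRadius, diam_ball_eq z hr, mul_div_cancel_left₀ r two_ne_zero]

lemma discRadius_closedBall (z : ℂ) {r : ℝ} (hr : 0 ≤ r) : discRadius (closedBall z r) = r := by
  rw [discRadius, diam_closedBall_eq z hr, mul_div_cancel_left₀ r two_ne_zero]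

lemma IsOpenDisc.discRadius_pos {D : Set ℂ} (hD : IsOpenDisc D) : 0 < discRadius D := by
  obtain ⟨z, r, hr, rfl⟩ := hD
  rwa [discRadius_ball z hr.le]

lemma IsOpenDisc.exists_eq_ball_discRadius {D : Set ℂ} (hD : IsOpenDisc D) :
    ∃ z, D = ball z (discRadius D) := by
  obtain ⟨z, r, hr, rfl⟩ := hD
  exact ⟨z, by rw [discRadius_ball z hr.le]⟩

lemma IsClosedDisc.exists_eq_closedBall_discRadius {D : Set ℂ} (hD : IsClosedDisc D) :
    ∃ z, D = closedBall z (discRadius D) := by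
  obtain ⟨z, r, hr, rfl⟩ := hD
  exact ⟨z, by rw [discRadius_closedBall z hr.le]⟩

lemma summable_and_tsum_lt_of_tsum_ofReal_lt {ι : Type*} {f : ι → ℝ} (hf : ∀ i, 0 ≤ f i) {a : ℝ}
    (h : ∑' i, ENNReal.ofReal (f i) < ENNReal.ofReal a) : Summable f ∧ ∑' i, f i < a := by
  have hs : Summable f := by
    simpa only [ENNReal.toReal_ofReal (hf _)] using ENNReal.summable_toReal h.ne_top
  rw [← ENNReal.ofReal_tsum_of_nonneg hf hs] at h
  exact ⟨hs, (ENNReal.ofReal_lt_ofReal_iff_of_nonneg (tsum_nonneg hf)).mp h⟩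

lemma SwissCheese.radSum_lt_of_delta_pos {D : SwissCheese} (hδ : 0 < D.delta) :
    radSum D.𝒟 < ENNReal.ofReal (discRadius D.Δ) := by
  have hΔ : 0 ≤ discRadius D.Δ := div_nonneg diam_nonneg zero_le_two
  rw [SwissCheese.delta, EReal.sub_pos] at hδ
  rwa [← EReal.coe_ennreal_lt_coe_ennreal_iff, EReal.coe_ennreal_ofReal,
    max_eq_left hΔ]

end Radii

section Carpet

lemma unitSquare_eq_reProdIm : unitSquare = Icc 0 1 ×ℂ Icc 0 1 := rfl

lemma isOpen_openSquare (a : ℂ) (l : ℝ) : IsOpen (openSquare a l) :=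
  isOpen_Ioo.reProdIm isOpen_Ioo

lemma isCompact_sierpinskiCarpet : IsCompact sierpinskiCarpet :=
  (isCompact_Icc.reProdIm isCompact_Icc).diff <|
    isOpen_iUnion fun _ => isOpen_iUnion fun _ => isOpen_iUnion fun _ => isOpen_openSquare _ _

lemma triadic_midpoint_mem_Ioo (k m : ℕ) :
    (m + 1 / 2 : ℝ) / 3 ^ k ∈ Ioo (((3 : ℝ) ^ (k + 1))⁻¹ * (3 * m + 1 : ℕ))
      (((3 : ℝ) ^ (k + 1))⁻¹ * (3 * m + 1 : ℕ) + ((3 : ℝ) ^ (k + 1))⁻¹) := by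
  have hmid : (m + 1 / 2 : ℝ) / 3 ^ k = ((3 : ℝ) ^ (k + 1))⁻¹ * ((3 * m + 1 : ℕ) + 1 / 2) := by
    push_cast
    field_simp
    ring
  have hpos : 0 < ((3 : ℝ) ^ (k + 1))⁻¹ := by positivity
  constructor <;> linarith

lemma triadic_midpoint_notMem_sierpinskiCarpet {k m n : ℕ} (hm : m < 3 ^ k) (hn : n < 3 ^ k) :
    (⟨(m + 1 / 2) / 3 ^ k, (n + 1 / 2) / 3 ^ k⟩ : ℂ) ∉ sierpinskiCarpet := by
  refine fun h => h.2 (mem_iUnion₂.mpr ⟨k, ⟨m, hm⟩, mem_iUnion.mpr ⟨⟨n, hn⟩, ?_⟩⟩)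
  simp only [openSquare, mem_ofPred_eq, Complex.re_ofReal_mul, Complex.im_ofReal_mul,
    Complex.add_re, Complex.add_im, Complex.natCast_re, Complex.natCast_im, Complex.mul_I_re,
    Complex.mul_I_im, neg_zero, add_zero, zero_add]
  exact ⟨triadic_midpoint_mem_Ioo k m, triadic_midpoint_mem_Ioo k n⟩

lemma tendsto_triadic_midpoint {x : ℝ} (hx : 0 ≤ x) :
    Tendsto (fun k : ℕ => (⌊x * 3 ^ k⌋₊ + 1 / 2 : ℝ) / 3 ^ k) atTop (𝓝 x) := by
  have hpow : Tendsto (fun k : ℕ => (3 : ℝ) ^ k) atTop atTop :=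
    tendsto_pow_atTop_atTop_of_one_lt (by norm_num)
  simpa only [add_div, add_zero, comp_def] using
    ((tendsto_nat_floor_mul_div_atTop hx).comp hpow).add (hpow.const_div_atTop (1 / 2))

lemma interior_sierpinskiCarpet : interior sierpinskiCarpet = ∅ := by
  refine eq_empty_of_forall_notMem fun z hz => ?_
  have hzQ : z ∈ interior unitSquare := interior_mono sdiff_subset hz
  rw [unitSquare_eq_reProdIm, Complex.interior_reProdIm, interior_Icc] at hzQ
  obtain ⟨hre, him⟩ := hzQ
  have hfloor : ∀ {x : ℝ}, x ∈ Ioo 0 1 → ∀ k, ⌊x * 3 ^ k⌋₊ < 3 ^ k := fun hx k => by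
    rw [Nat.floor_lt (mul_nonneg hx.1.le (by positivity))]
    exact_mod_cast mul_lt_of_lt_one_left (by positivity) hx.2
  have hlim : Tendsto (fun k : ℕ => (⟨(⌊z.re * 3 ^ k⌋₊ + 1 / 2) / 3 ^ k,
      (⌊z.im * 3 ^ k⌋₊ + 1 / 2) / 3 ^ k⟩ : ℂ)) atTop (𝓝 z) :=
    (Complex.equivRealProdCLM.symm.continuous.tendsto (z.re, z.im)).comp
      ((tendsto_triadic_midpoint hre.1.le).prodMk_nhds (tendsto_triadic_midpoint him.1.le))
  obtain ⟨k, hk⟩ := (hlim.eventually_mem (mem_interior_iff_mem_nhds.mp hz)).exists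
  exact triadic_midpoint_notMem_sierpinskiCarpet (hfloor hre k) (hfloor him k) hk

end Carpet

theorem swiss_cheese_set_contains_sierpinski_carpet_general (D : SwissCheese) (hδ : 0 < D.delta)
    {K : Set ℂ} (hK : IsCompact K) (hKint : interior K = ∅) :
    ∃ S : Set ℂ, S ⊆ D.X ∧ Nonempty (S ≃ₜ K) := by
  have hpos : ∀ B : D.𝒟, 0 < discRadius B := fun B => (D.h𝒟 B B.2).discRadius_pos
  choose c hc using fun B : D.𝒟 => (D.h𝒟 B B.2).exists_eq_ball_discRadius
  obtain ⟨z, hz⟩ := D.hΔ.exists_eq_closedBall_discRadius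
  obtain ⟨hs, hlt⟩ := summable_and_tsum_lt_of_tsum_ofReal_lt (fun B => (hpos B).le)
    (SwissCheese.radSum_lt_of_delta_pos hδ)
  obtain ⟨S, hS, hSK⟩ :=
    exists_homeomorph_subset_closedBall_diff (c := c) hK hKint hpos hs z hlt
  refine ⟨S, hS.trans ?_, hSK⟩
  rw [SwissCheese.X, ← hz, sUnion_eq_iUnion]
  exact sdiff_subset_sdiff_right <| iUnion_mono fun B => (hc B).subset.trans ball_subset_closedBall

theorem swiss_cheese_set_contains_sierpinski_carpet (D : SwissCheese)
    (hδ : 0 < D.delta) (hint : interior D.X = ∅) :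
    ∃ S : Set ℂ, S ⊆ D.X ∧ Nonempty (S ≃ₜ sierpinskiCarpet) :=
  swiss_cheese_set_contains_sierpinski_carpet_general D hδ isCompact_sierpinskiCarpet
    interior_sierpinskiCarpet
end

section
/- Let X be a semiclassical Swiss cheese set. Then R(X) ≠ C(X); indeed R(X) is an essential uniform algebra on X. -/
open Metric

/-!
Integrate `dz` over the outer circle and `-dz` over the circles bounding the holes. Summability of
the radii makes this a complex measure on `X`. It annihilates `R₀(X)`: by partial fractions only the
terms `(z - a)⁻¹` with `a ∉ X` have nonzero integrals over single circles, and the total winding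
number about such an `a` vanishes. Two distinct circles meet in at most two points, so there is no
cancellation and the measure charges every open set that meets one of the circles; a continuous
function supported in that open set and not annihilated by the measure lies outside `R(X)`. An open
set that meets `X` but none of the circles contains a closed disc inside `X`, by connectedness, and
there the circle bounding that disc alone plays the same role.
-/

open MeasureTheory Set Complex
open scoped Real

section PartialFractions

variable {K : Type*} [Field K] {X : Set K}

/-- The space of functions on `X` spanned by the polynomials and the powers `(x - a)⁻ⁿ⁻¹` with
pole `a ∉ X`, that is, the rational functions given by their partial fraction expansions. -/
def simpleFractions (X : Set K) : Submodule K (X → K) :=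
  Submodule.span K (range (fun (p : Polynomial K) (x : X) => p.eval (x : K)) ∪
    {f | ∃ a ∉ X, ∃ n : ℕ, f = fun x : X => (((x : K) - a) ^ (n + 1))⁻¹})

lemma polynomial_mem_simpleFractions (p : Polynomial K) :
    (fun x : X => p.eval (x : K)) ∈ simpleFractions X :=
  Submodule.subset_span (.inl ⟨p, rfl⟩)

lemma inv_sub_pow_mem_simpleFractions {a : K} (ha : a ∉ X) (n : ℕ) :
    (fun x : X => (((x : K) - a) ^ (n + 1))⁻¹) ∈ simpleFractions X :=
  Submodule.subset_span (.inr ⟨a, ha, n, rfl⟩)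

lemma inv_sub_mul_polynomial_mem_simpleFractions {a : K} (ha : a ∉ X) (p : Polynomial K) :
    (fun x : X => ((x : K) - a)⁻¹ * p.eval (x : K)) ∈ simpleFractions X := by
  have hmem := add_mem
    (polynomial_mem_simpleFractions (X := X) (p /ₘ (Polynomial.X - Polynomial.C a)))
    (Submodule.smul_mem _ (p.eval a) (inv_sub_pow_mem_simpleFractions ha 0))
  convert! hmem using 1
  ext ⟨x, hx⟩
  have hxa : x - a ≠ 0 := sub_ne_zero.2 fun h => ha (h ▸ hx)
  have hdiv := congrArg (Polynomial.eval x)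
    (Polynomial.modByMonic_add_div p (Polynomial.X - Polynomial.C a))
  simp only [Polynomial.modByMonic_X_sub_C_eq_C_eval, Polynomial.eval_add, Polynomial.eval_mul,
    Polynomial.eval_sub, Polynomial.eval_X, Polynomial.eval_C] at hdiv
  simp only [Pi.add_apply, Pi.smul_apply, smul_eq_mul, zero_add, pow_one]
  rw [← hdiv]
  field_simp
  ring

lemma inv_sub_mul_inv_sub_pow_mem_simpleFractions {a b : K} (ha : a ∉ X) (hb : b ∉ X) (n : ℕ) :
    (fun x : X => ((x : K) - a)⁻¹ * (((x : K) - b) ^ n)⁻¹) ∈ simpleFractions X := by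
  rcases eq_or_ne a b with rfl | hab
  · simpa only [← mul_inv, ← pow_succ'] using inv_sub_pow_mem_simpleFractions ha n
  induction n with
  | zero => simpa using inv_sub_pow_mem_simpleFractions ha 0
  | succ n ih =>
    have resolvent : ∀ x : X, ((x : K) - a)⁻¹ * (((x : K) - b) ^ (n + 1))⁻¹ =
        (a - b)⁻¹ * (((x : K) - a)⁻¹ * (((x : K) - b) ^ n)⁻¹ - (((x : K) - b) ^ (n + 1))⁻¹) := by
      rintro ⟨x, hx⟩
      have hxa : x - a ≠ 0 := sub_ne_zero.2 fun h => ha (h ▸ hx)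
      have hxb : x - b ≠ 0 := sub_ne_zero.2 fun h => hb (h ▸ hx)
      have hab' : a - b ≠ 0 := sub_ne_zero.2 hab
      field_simp
      ring
    simp only [resolvent]
    exact Submodule.smul_mem _ (a - b)⁻¹ (sub_mem ih (inv_sub_pow_mem_simpleFractions hb n))

lemma inv_sub_mul_mem_simpleFractions {a : K} (ha : a ∉ X) {f : X → K}
    (hf : f ∈ simpleFractions X) : (fun x : X => ((x : K) - a)⁻¹ * f x) ∈ simpleFractions X := by
  have hle : simpleFractions X ≤
      (simpleFractions X).comap (LinearMap.mulLeft K fun x : X => ((x : K) - a)⁻¹) := by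
    refine Submodule.span_le.2 (union_subset ?_ ?_)
    · rintro _ ⟨p, rfl⟩
      exact inv_sub_mul_polynomial_mem_simpleFractions ha p
    · rintro _ ⟨b, hb, n, rfl⟩
      exact inv_sub_mul_inv_sub_pow_mem_simpleFractions ha hb (n + 1)
  exact hle hf

theorem eval_div_eval_mem_simpleFractions (p : Polynomial K) {q : Polynomial K} (hsplit : q.Splits)
    (hq : ∀ x ∈ X, q.eval x ≠ 0) :
    (fun x : X => p.eval (x : K) / q.eval (x : K)) ∈ simpleFractions X := by
  have hprod : ∀ s : Multiset K, (∀ a ∈ s, a ∉ X) →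
      (fun x : X => ((s.map fun a => (x : K) - a).prod)⁻¹ * p.eval (x : K)) ∈
        simpleFractions X := by
    intro s
    induction s using Multiset.induction with
    | empty => simpa using polynomial_mem_simpleFractions p
    | cons a s ih =>
      intro hs
      simp only [Multiset.map_cons, Multiset.prod_cons, mul_inv, mul_assoc]
      exact inv_sub_mul_mem_simpleFractions (hs a (Multiset.mem_cons_self a s))
        (ih fun b hb => hs b (Multiset.mem_cons_of_mem hb))
  have hroots : ∀ a ∈ q.roots, a ∉ X := fun a ha haX =>
    hq a haX (Polynomial.isRoot_of_mem_roots ha)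
  convert! Submodule.smul_mem _ q.leadingCoeff⁻¹ (hprod q.roots hroots) using 1
  ext x
  simp only [hsplit.eval_eq_prod_roots, Pi.smul_apply, smul_eq_mul, div_eq_mul_inv, mul_inv]
  ring

end PartialFractions

section DensityFunctional

variable {α : Type*} [TopologicalSpace α] [CompactSpace α] [MeasurableSpace α]
  [OpensMeasurableSpace α] {μ : Measure α} {w : α → ℂ}

lemma integrable_mul_of_continuousMap (hw : Integrable w μ) (f : C(α, ℂ)) :
    Integrable (fun x => f x * w x) μ :=
  hw.bdd_mul f.continuous.aestronglyMeasurable (.of_forall f.norm_coe_le_norm)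

/-- Integration against the complex measure `w μ`, as a bounded linear functional on continuous
functions. -/
noncomputable def densityFunctional (hw : Integrable w μ) : C(α, ℂ) →L[ℂ] ℂ :=
  LinearMap.mkContinuous
    { toFun := fun f => ∫ x, f x * w x ∂μ
      map_add' := fun f g => by
        simp only [ContinuousMap.add_apply, add_mul]
        exact integral_add (integrable_mul_of_continuousMap hw f)
          (integrable_mul_of_continuousMap hw g)
      map_smul' := fun a f => by
        simp only [ContinuousMap.smul_apply, smul_eq_mul, mul_assoc, RingHom.id_apply]
        exact integral_const_mul a _ }
    (∫ x, ‖w x‖ ∂μ) fun f => by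
      rw [mul_comm, ← integral_const_mul]
      refine norm_integral_le_of_norm_le (hw.norm.const_mul _) (.of_forall fun x => ?_)
      rw [norm_mul]
      exact mul_le_mul_of_nonneg_right (f.norm_coe_le_norm x) (norm_nonneg _)

lemma densityFunctional_apply (hw : Integrable w μ) (f : C(α, ℂ)) :
    densityFunctional hw f = ∫ x, f x * w x ∂μ :=
  rfl

end DensityFunctional

section RestrictFunctional

variable {E : Type*} [TopologicalSpace E] [T2Space E] [MeasurableSpace E] [OpensMeasurableSpace E]
  {X : Set E} [CompactSpace X] {μ : Measure E} {w : E → ℂ}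

lemma measurableSet_of_compactSpace : MeasurableSet X :=
  (isCompact_iff_compactSpace.2 ‹_›).measurableSet

/-- Integration over `X` against the complex measure `w μ`, as a bounded linear functional on
`C(X, ℂ)`. -/
noncomputable def restrictFunctional (X : Set E) [CompactSpace X] (hw : Integrable w μ) :
    C(X, ℂ) →L[ℂ] ℂ :=
  densityFunctional
    ((integrableOn_iff_comap_subtypeVal measurableSet_of_compactSpace).1 hw.integrableOn)

lemma restrictFunctional_eq_integral (hw : Integrable w μ) (hX : ∀ᵐ x ∂μ, x ∈ X) {f : C(X, ℂ)}
    {F : E → ℂ} (hfF : ∀ x : X, f x = F x) : restrictFunctional X hw f = ∫ x, F x * w x ∂μ := by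
  calc restrictFunctional X hw f = ∫ x : X, F x * w x ∂(μ.comap (↑)) := by
        simp only [restrictFunctional, densityFunctional_apply, hfF, Function.comp_apply]
    _ = ∫ x in X, F x * w x ∂μ :=
        integral_subtype_comap measurableSet_of_compactSpace fun x => F x * w x
    _ = ∫ x, F x * w x ∂μ := by rw [Measure.restrict_eq_self_of_ae_mem hX]

end RestrictFunctional

theorem exists_restrictFunctional_ne_zero {E : Type*} [NormedAddCommGroup E] [NormedSpace ℝ E]
    [FiniteDimensional ℝ E] [MeasurableSpace E] [BorelSpace E] {X : Set E} [CompactSpace X]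
    {μ : Measure E} {w : E → ℂ} (hw : Integrable w μ) (hX : ∀ᵐ x ∂μ, x ∈ X)
    {O : Set E} (hO : IsOpen O) (hwO : ∃ᵐ x ∂μ, x ∈ O ∧ w x ≠ 0) :
    ∃ f : C(X, ℂ), restrictFunctional X hw f ≠ 0 ∧ ∀ x : X, (x : E) ∉ O → f x = 0 := by
  by_contra! hzero
  have hw0 : ∀ᵐ x ∂μ, x ∈ O → w x = 0 := by
    refine hO.ae_eq_zero_of_integral_contDiff_smul_eq_zero
      (hw.locallyIntegrable.locallyIntegrableOn O) fun g hg _ hgO => ?_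
    have hgc : Continuous g := hg.continuous
    let f : C(X, ℂ) := ⟨fun x => (g x : ℂ), by fun_prop⟩
    have hf : restrictFunctional X hw f = ∫ x, g x • w x ∂μ :=
      restrictFunctional_eq_integral hw hX (F := fun x => (g x : ℂ)) fun _ => rfl
    by_contra hne
    obtain ⟨x, hxO, hfx⟩ := hzero f (hf ▸ hne)
    exact hfx (by simp [f, image_eq_zero_of_notMem_tsupport fun hx => hxO (hgO hx)])
  exact hwO (hw0.mono fun x hx hxO => hxO.2 (hx hxO.1))


section AngularMeasure

variable {c : ℂ} {r : ℝ}

/-- The push-forward of `dθ` on `(0, 2π]` under `θ ↦ c + r exp(iθ)`; its total mass is `2π`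
whatever the radius, and `dz = i (z - c) dθ` on the circle. -/
noncomputable def angularMeasure (c : ℂ) (r : ℝ) : Measure ℂ :=
  (volume.restrict (Ioc 0 (2 * π))).map (circleMap c r)

instance : IsFiniteMeasure (angularMeasure c r) := by
  unfold angularMeasure; infer_instance

lemma angularMeasure_real_univ : (angularMeasure c r).real univ = 2 * π := by
  rw [angularMeasure, map_measureReal_apply (measurable_circleMap c r) .univ, preimage_univ,
    measureReal_restrict_apply_univ, Real.volume_real_Ioc_of_le Real.two_pi_pos.le, sub_zero]

lemma ae_angularMeasure_mem_sphere (hr : 0 ≤ r) : ∀ᵐ z ∂angularMeasure c r, z ∈ sphere c r :=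
  (ae_map_iff (measurable_circleMap c r).aemeasurable isClosed_sphere.measurableSet).2
    (.of_forall (circleMap_mem_sphere c hr))

lemma ae_angularMeasure_notMem_of_countable (hr : r ≠ 0) {s : Set ℂ} (hs : s.Countable) :
    ∀ᵐ z ∂angularMeasure c r, z ∉ s :=
  (ae_map_iff (measurable_circleMap c r).aemeasurable hs.measurableSet.compl).2
    ((hs.preimage_circleMap c hr).ae_notMem _)

lemma frequently_angularMeasure_mem (hr : 0 ≤ r) {O : Set ℂ} (hO : IsOpen O)
    (hne : (sphere c r ∩ O).Nonempty) : ∃ᵐ z ∂angularMeasure c r, z ∈ O := by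
  obtain ⟨z, hz, hzO⟩ := hne
  rw [← abs_of_nonneg hr, ← image_circleMap_Ioc] at hz
  obtain ⟨θ, hθ, rfl⟩ := hz
  have hV : IsOpen (circleMap c r ⁻¹' O) := hO.preimage (continuous_circleMap c r)
  have hθ' : θ ∈ closure (Ioo 0 (2 * π)) := by
    rw [closure_Ioo Real.two_pi_pos.ne]
    exact Ioc_subset_Icc_self hθ
  have hpos := (hV.inter isOpen_Ioo).measure_pos volume (mem_closure_iff.1 hθ' _ hV hzO)
  refine frequently_ae_iff.2 (ne_of_gt ?_)
  change 0 < angularMeasure c r O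
  rw [angularMeasure, Measure.map_apply (measurable_circleMap c r) hO.measurableSet,
    Measure.restrict_apply hV.measurableSet]
  exact hpos.trans_le (measure_mono (inter_subset_inter_right _ Ioo_subset_Ioc_self))

lemma circleIntegral_eq_integral_angularMeasure {F : Type*} [NormedAddCommGroup F]
    [NormedSpace ℂ F] {f : ℂ → F} (hf : AEStronglyMeasurable f (angularMeasure c r)) :
    (∮ z in C(c, r), f z) = ∫ z, (I * (z - c)) • f z ∂angularMeasure c r := by
  rw [angularMeasure] at hf ⊢
  rw [integral_map (measurable_circleMap c r).aemeasurable (by fun_prop),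
    ← intervalIntegral.integral_of_le Real.two_pi_pos.le, circleIntegral]
  simp only [deriv_circleMap, circleMap_sub_center, mul_comm]

end AngularMeasure

section CircleIntegral

variable {a c : ℂ} {r : ℝ}

lemma circleIntegral_sub_inv_of_notMem_sphere (hr : 0 ≤ r) (ha : a ∉ sphere c r) :
    (∮ z in C(c, r), (z - a)⁻¹) = (ball c r).indicator (fun _ => 2 * π * I) a := by
  by_cases hball : a ∈ ball c r
  · rw [circleIntegral.integral_sub_inv_of_mem_ball hball, indicator_of_mem hball]
  have hne : ∀ z ∈ closedBall c r, z - a ≠ 0 := by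
    rintro z hz h
    rw [sub_eq_zero.1 h, ← ball_union_sphere] at hz
    exact hz.elim hball ha
  rw [indicator_of_notMem hball]
  refine DiffContOnCl.circleIntegral_eq_zero hr (DifferentiableOn.diffContOnCl ?_)
  exact ((differentiableOn_id.sub_const a).inv hne).mono closure_ball_subset_closedBall

lemma circleIntegral_inv_sub_pow (n : ℕ) :
    (∮ z in C(c, r), ((z - a) ^ (n + 2))⁻¹) = 0 := by
  have h := circleIntegral.integral_sub_zpow_of_ne (n := -((n + 2 : ℕ) : ℤ)) (by lia) c a r
  simpa only [zpow_neg, zpow_natCast] using h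

end CircleIntegral

theorem finite_sphere_inter_sphere {V P : Type*} [NormedAddCommGroup V] [InnerProductSpace ℝ V]
    [MetricSpace P] [NormedAddTorsor V P] [FiniteDimensional ℝ V] (hV : Module.finrank ℝ V = 2)
    {c₁ c₂ : P} {r₁ r₂ : ℝ} (h : (c₁, r₁) ≠ (c₂, r₂)) : (sphere c₁ r₁ ∩ sphere c₂ r₂).Finite := by
  rcases eq_or_ne c₁ c₂ with rfl | hc
  · refine (Set.finite_empty (α := P)).subset ?_
    rintro z ⟨h₁, h₂⟩
    exact h (by rw [← mem_sphere.1 h₁, ← mem_sphere.1 h₂])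
  · rcases (sphere c₁ r₁ ∩ sphere c₂ r₂).subsingleton_or_nontrivial with hs | hs
    · exact hs.finite
    obtain ⟨p₁, hp₁, p₂, hp₂, hp⟩ := hs
    refine (Set.toFinite {p₁, p₂}).subset fun p hpp => ?_
    exact EuclideanGeometry.eq_of_dist_eq_of_dist_eq_of_finrank_eq_two hV hc hp
      hp₁.1 hp₂.1 hpp.1 hp₁.2 hp₂.2 hpp.2

/-- The algebra `R₀(X)` of restrictions to `X` of rational functions without poles on `X`. -/
def rationalFunctions (X : Set ℂ) : Set C(X, ℂ) :=
  {f | ∃ p q : Polynomial ℂ,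
    (∀ x : X, q.eval (x : ℂ) ≠ 0) ∧ ∀ x : X, f x = p.eval (x : ℂ) / q.eval (x : ℂ)}

section CircleCycle

variable {κ : Type*} {X : Set ℂ} {c : κ → ℂ} {r : κ → ℝ} {ε : κ → ℂ}

/-- The formal sum `∑ ε k ∂(ball (c k) (r k))` is a cycle in `X`, of finite total length, whose
winding number about every point off `X` is zero. The circles are required to be distinct and the
weights nonzero so that the cycle is seen by every open set that meets one of its circles. -/
structure IsNullCycle (X : Set ℂ) (c : κ → ℂ) (r : κ → ℝ) (ε : κ → ℂ) : Prop where
  radius_pos : ∀ k, 0 < r k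
  weight_ne_zero : ∀ k, ε k ≠ 0
  injective : Function.Injective fun k => (c k, r k)
  sphere_subset : ∀ k, sphere (c k) (r k) ⊆ X
  summable : Summable fun k => ‖ε k‖ * r k
  hasSum_winding : ∀ a ∉ X, HasSum (fun k => (ball (c k) (r k)).indicator (fun _ => ε k) a) 0

/-- The sum of the angular measures on the circles of a family. -/
noncomputable def circlesMeasure (c : κ → ℂ) (r : κ → ℝ) : Measure ℂ :=
  Measure.sum fun k => angularMeasure (c k) (r k)

/-- The density of the complex measure `∑ ε k dz` on the union of circles with respect to
`circlesMeasure c r`. Almost everywhere only one term of the sum is nonzero, see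
`IsNullCycle.circlesDensity_ae_eq`. -/
noncomputable def circlesDensity (c : κ → ℂ) (r : κ → ℝ) (ε : κ → ℂ) (z : ℂ) : ℂ :=
  ∑' k, (sphere (c k) (r k)).indicator (fun z => ε k * (I * (z - c k))) z

namespace IsNullCycle

variable [Countable κ]

lemma ae_mem (h : IsNullCycle X c r ε) : ∀ᵐ z ∂circlesMeasure c r, z ∈ X :=
  Measure.ae_sum_iff.2 fun k =>
    (ae_angularMeasure_mem_sphere (h.radius_pos k).le).mono (h.sphere_subset k)

lemma circlesDensity_ae_eq (h : IsNullCycle X c r ε) (k : κ) :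
    circlesDensity c r ε =ᵐ[angularMeasure (c k) (r k)] fun z => ε k * (I * (z - c k)) := by
  have hother : ∀ᵐ z ∂angularMeasure (c k) (r k),
      ∀ l, l ≠ k → z ∉ sphere (c k) (r k) ∩ sphere (c l) (r l) :=
    ae_all_iff.2 fun l => Filter.eventually_imp_distrib_left.2 fun hlk =>
      ae_angularMeasure_notMem_of_countable (h.radius_pos k).ne'
        (finite_sphere_inter_sphere Complex.finrank_real_complex
          (h.injective.ne hlk.symm)).countable
  filter_upwards [hother, ae_angularMeasure_mem_sphere (h.radius_pos k).le] with z hz hzk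
  rw [circlesDensity, tsum_eq_single k fun l hlk =>
    indicator_of_notMem (fun hzl => hz l hlk ⟨hzk, hzl⟩) _, indicator_of_mem hzk]

lemma norm_circlesDensity_ae_eq (h : IsNullCycle X c r ε) (k : κ) :
    (fun z => ‖circlesDensity c r ε z‖) =ᵐ[angularMeasure (c k) (r k)] fun _ => ‖ε k‖ * r k := by
  filter_upwards [h.circlesDensity_ae_eq k, ae_angularMeasure_mem_sphere (h.radius_pos k).le]
    with z hz hzk
  rw [hz, norm_mul, norm_mul, norm_I, one_mul, mem_sphere_iff_norm.1 hzk]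

lemma integrable_circlesDensity (h : IsNullCycle X c r ε) :
    Integrable (circlesDensity c r ε) (circlesMeasure c r) := by
  refine integrable_sum_measure (fun k => ?_) ?_
  · refine Integrable.of_bound ?_ _ (h.norm_circlesDensity_ae_eq k).le
    exact AEStronglyMeasurable.congr (by fun_prop) (h.circlesDensity_ae_eq k).symm
  · have hint : ∀ k, ∫ z, ‖circlesDensity c r ε z‖ ∂angularMeasure (c k) (r k) =
        2 * π * (‖ε k‖ * r k) := fun k => by
      rw [integral_congr_ae (h.norm_circlesDensity_ae_eq k), integral_const,
        angularMeasure_real_univ, smul_eq_mul]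
    simpa only [hint] using h.summable.mul_left (2 * π)

lemma frequently_circlesDensity_ne_zero (h : IsNullCycle X c r ε) {O : Set ℂ} (hO : IsOpen O)
    {k : κ} (hk : (sphere (c k) (r k) ∩ O).Nonempty) :
    ∃ᵐ z ∂circlesMeasure c r, z ∈ O ∧ circlesDensity c r ε z ≠ 0 := by
  have hne : ∀ᵐ z ∂angularMeasure (c k) (r k), circlesDensity c r ε z ≠ 0 := by
    filter_upwards [h.norm_circlesDensity_ae_eq k] with z hz
    rw [← norm_ne_zero_iff, hz]
    exact mul_ne_zero (norm_ne_zero_iff.2 (h.weight_ne_zero k)) (h.radius_pos k).ne'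
  have hle : angularMeasure (c k) (r k) ≤ circlesMeasure c r := Measure.le_sum _ k
  exact ((frequently_angularMeasure_mem (h.radius_pos k).le hO hk).and_eventually hne).filter_mono
    (ae_mono hle)

variable [CompactSpace X]

/-- The functional `f ↦ ∑ ε k ∮ f` on `C(X, ℂ)`. -/
noncomputable def functional (h : IsNullCycle X c r ε) : C(X, ℂ) →L[ℂ] ℂ :=
  restrictFunctional X h.integrable_circlesDensity

lemma hasSum_functional (h : IsNullCycle X c r ε) {f : C(X, ℂ)} {F : ℂ → ℂ} (hF : Measurable F)
    (hfF : ∀ x : X, f x = F x) :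
    HasSum (fun k => ε k * ∮ z in C(c k, r k), F z) (h.functional f) := by
  have hbound : ∀ᵐ z ∂circlesMeasure c r, ‖F z‖ ≤ ‖f‖ := by
    filter_upwards [h.ae_mem] with z hz
    exact hfF ⟨z, hz⟩ ▸ f.norm_coe_le_norm _
  have hcircle : ∀ k, ∫ z, F z * circlesDensity c r ε z ∂angularMeasure (c k) (r k) =
      ε k * ∮ z in C(c k, r k), F z := fun k => by
    rw [circleIntegral_eq_integral_angularMeasure hF.aestronglyMeasurable, ← integral_const_mul]
    refine integral_congr_ae ((h.circlesDensity_ae_eq k).mono fun z hz => ?_)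
    simp only [hz, smul_eq_mul]
    ring
  rw [functional, restrictFunctional_eq_integral _ h.ae_mem hfF]
  simpa only [hcircle, circlesMeasure] using
    hasSum_integral_measure (h.integrable_circlesDensity.bdd_mul hF.aestronglyMeasurable hbound)

lemma functional_polynomial (h : IsNullCycle X c r ε) (p : Polynomial ℂ) :
    h.functional (p.toContinuousMapOn X) = 0 := by
  refine (h.hasSum_functional p.continuous.measurable fun _ => rfl).unique ?_
  have hzero : ∀ k, (∮ z in C(c k, r k), p.eval z) = 0 := fun k =>
    p.differentiable.diffContOnCl.circleIntegral_eq_zero (h.radius_pos k).le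
  simpa only [hzero, mul_zero] using hasSum_zero

lemma functional_inv_sub_pow (h : IsNullCycle X c r ε) {a : ℂ} (ha : a ∉ X) {n : ℕ}
    {f : C(X, ℂ)} (hf : ∀ x : X, f x = (((x : ℂ) - a) ^ (n + 1))⁻¹) : h.functional f = 0 := by
  have hF : Measurable fun z : ℂ => ((z - a) ^ (n + 1))⁻¹ := by fun_prop
  refine (h.hasSum_functional hF hf).unique ?_
  rcases n with _ | n
  · have hpole : ∀ k, (∮ z in C(c k, r k), (z - a)⁻¹) =
        (ball (c k) (r k)).indicator (fun _ => 2 * π * I) a := fun k =>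
      circleIntegral_sub_inv_of_notMem_sphere (h.radius_pos k).le fun hk =>
        ha (h.sphere_subset k hk)
    have hwind := (h.hasSum_winding a ha).mul_right (2 * π * I)
    simp only [← indicator_mul_const, zero_mul] at hwind
    simpa only [zero_add, pow_one, hpole, ← indicator_const_mul] using hwind
  · simpa only [circleIntegral_inv_sub_pow, mul_zero] using hasSum_zero

lemma simpleFractions_le_map_ker (h : IsNullCycle X c r ε) :
    simpleFractions X ≤
      h.functional.toLinearMap.ker.map (ContinuousMap.coeFnLinearMap ℂ) := by
  refine Submodule.span_le.2 (union_subset ?_ ?_)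
  · rintro _ ⟨p, rfl⟩
    exact ⟨p.toContinuousMapOn X, h.functional_polynomial p, rfl⟩
  · rintro _ ⟨a, ha, n, rfl⟩
    have hpole : ∀ x : X, ((x : ℂ) - a) ^ (n + 1) ≠ 0 := fun x =>
      pow_ne_zero _ (sub_ne_zero.2 fun hxa => ha (hxa ▸ x.2))
    have hcont : Continuous fun x : X => (((x : ℂ) - a) ^ (n + 1))⁻¹ :=
      Continuous.inv₀ (by fun_prop) hpole
    exact ⟨⟨_, hcont⟩, h.functional_inv_sub_pow ha fun _ => rfl, rfl⟩

theorem functional_eq_zero_of_mem_closure (h : IsNullCycle X c r ε) {f : C(X, ℂ)}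
    (hf : f ∈ closure (rationalFunctions X)) : h.functional f = 0 := by
  refine closure_minimal ?_ h.functional.isClosed_ker hf
  rintro f ⟨p, q, hq, hfpq⟩
  obtain ⟨g, hg, hgf⟩ := h.simpleFractions_le_map_ker
    (eval_div_eval_mem_simpleFractions p (IsAlgClosed.splits q) fun x hx => hq ⟨x, hx⟩)
  have hfg : f = g := DFunLike.coe_injective ((funext hfpq).trans hgf.symm)
  exact hfg ▸ hg

theorem exists_notMem_closure_rationalFunctions (h : IsNullCycle X c r ε) {O : Set ℂ}
    (hO : IsOpen O) {k : κ} (hk : (sphere (c k) (r k) ∩ O).Nonempty) :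
    ∃ f ∉ closure (rationalFunctions X), ∀ x : X, (x : ℂ) ∉ O → f x = 0 := by
  obtain ⟨f, hf, hfO⟩ := exists_restrictFunctional_ne_zero h.integrable_circlesDensity h.ae_mem hO
    (h.frequently_circlesDensity_ne_zero hO hk)
  exact ⟨f, fun hmem => hf (h.functional_eq_zero_of_mem_closure hmem), hfO⟩

end IsNullCycle

lemma isNullCycle_of_closedBall_subset {x : ℂ} {δ : ℝ} (hδ : 0 < δ) (hX : closedBall x δ ⊆ X) :
    IsNullCycle X (fun _ : Unit => x) (fun _ => δ) fun _ => 1 where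
  radius_pos _ := hδ
  weight_ne_zero _ := one_ne_zero
  injective := Function.injective_of_subsingleton _
  sphere_subset _ := sphere_subset_closedBall.trans hX
  summable := .of_finite
  hasSum_winding a ha := by
    simpa only [indicator_of_notMem fun hmem => ha (hX (ball_subset_closedBall hmem))]
      using hasSum_zero

end CircleCycle

lemma hasSum_option {ι M : Type*} [AddCommMonoid M] [TopologicalSpace M] [ContinuousAdd M]
    {f : Option ι → M} {a : M} (h : HasSum (fun i => f (some i)) a) : HasSum f (a + f none) := by
  rw [← (Equiv.optionEquivSumPUnit.{0} ι).symm.hasSum_iff]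
  exact HasSum.sum h (hasSum_unique _)

lemma subset_ball_of_isPreconnected {α : Type*} [PseudoMetricSpace α] {s : Set α} {x : α} {r : ℝ}
    (hs : IsPreconnected s) (hne : (s ∩ ball x r).Nonempty) (hd : Disjoint s (sphere x r)) :
    s ⊆ ball x r := by
  refine hs.subset_of_closure_inter_subset isOpen_ball hne fun y hy => ?_
  have hy' := closure_ball_subset_closedBall hy.1
  rw [← ball_union_sphere] at hy'
  exact hy'.resolve_right (disjoint_left.1 hd hy.2)

section SwissCheese

variable {ι : Type*} {z₀ : ℂ} {R : ℝ} {c : ι → ℂ} {ρ : ι → ℝ}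

/-- The Swiss cheese set of the Swiss cheese with outer disc `closedBall z₀ R` and holes
`ball (c i) (ρ i)`. -/
def swissCheeseSet (z₀ : ℂ) (R : ℝ) (c : ι → ℂ) (ρ : ι → ℝ) : Set ℂ :=
  closedBall z₀ R \ ⋃ i, ball (c i) (ρ i)

lemma isCompact_swissCheeseSet : IsCompact (swissCheeseSet z₀ R c ρ) :=
  (isCompact_closedBall z₀ R).diff (isOpen_iUnion fun _ => isOpen_ball)

instance : CompactSpace (swissCheeseSet z₀ R c ρ) :=
  isCompact_iff_compactSpace.1 isCompact_swissCheeseSet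

lemma ball_subset_swissCheeseSet_of_disjoint {x : ℂ} {δ : ℝ} (hx : x ∈ swissCheeseSet z₀ R c ρ)
    (hδ : 0 < δ)
    (hd : ∀ k : Option ι, Disjoint (ball x δ) (sphere (k.elim z₀ c) (k.elim R ρ))) :
    ball x δ ⊆ swissCheeseSet z₀ R c ρ := by
  have hconn : IsPreconnected (ball x δ) := (convex_ball x δ).isPreconnected
  have hxδ : x ∈ ball x δ := mem_ball_self hδ
  have hxR : x ∈ ball z₀ R := by
    have hxR := hx.1
    rw [← ball_union_sphere] at hxR
    exact hxR.resolve_right (disjoint_left.1 (hd none) hxδ)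
  refine fun y hy => ⟨ball_subset_closedBall
    (subset_ball_of_isPreconnected hconn ⟨x, hxδ, hxR⟩ (hd none) hy), mt mem_iUnion.1 ?_⟩
  rintro ⟨i, hi⟩
  exact hx.2 (mem_iUnion.2
    ⟨i, subset_ball_of_isPreconnected hconn ⟨y, hy, hi⟩ (hd (some i)) hxδ⟩)

/-- `(Δ, 𝒟)` is a semiclassical Swiss cheese, where `Δ = closedBall z₀ R` and `𝒟` is the family of
the open discs `ball (c i) (ρ i)`. -/
structure IsSemiclassicalSwissCheese (z₀ : ℂ) (R : ℝ) (c : ι → ℂ) (ρ : ι → ℝ) : Prop where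
  outer_radius_pos : 0 < R
  radius_pos : ∀ i, 0 < ρ i
  disjoint : ∀ i j, i ≠ j → Disjoint (ball (c i) (ρ i)) (ball (c j) (ρ j))
  closedBall_ssubset : ∀ i, closedBall (c i) (ρ i) ⊂ closedBall z₀ R
  summable : Summable ρ

namespace IsSemiclassicalSwissCheese

lemma ball_subset_ball (h : IsSemiclassicalSwissCheese z₀ R c ρ) (i : ι) :
    ball (c i) (ρ i) ⊆ ball z₀ R := by
  rw [← interior_closedBall _ (h.radius_pos i).ne', ← interior_closedBall _ h.outer_radius_pos.ne']
  exact interior_mono (h.closedBall_ssubset i).subset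

lemma outer_sphere_subset (h : IsSemiclassicalSwissCheese z₀ R c ρ) :
    sphere z₀ R ⊆ swissCheeseSet z₀ R c ρ := by
  refine fun z hz => ⟨sphere_subset_closedBall hz, mt mem_iUnion.1 ?_⟩
  rintro ⟨i, hi⟩
  exact disjoint_left.1 sphere_disjoint_ball hz (h.ball_subset_ball i hi)

lemma sphere_subset (h : IsSemiclassicalSwissCheese z₀ R c ρ) (i : ι) :
    sphere (c i) (ρ i) ⊆ swissCheeseSet z₀ R c ρ := by
  refine fun z hz =>
    ⟨(h.closedBall_ssubset i).subset (sphere_subset_closedBall hz), mt mem_iUnion.1 ?_⟩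
  rintro ⟨j, hj⟩
  rcases eq_or_ne i j with rfl | hij
  · exact disjoint_left.1 sphere_disjoint_ball hz hj
  · have hdisj := (h.disjoint i j hij).closure_left isOpen_ball
    rw [closure_ball _ (h.radius_pos i).ne'] at hdisj
    exact disjoint_left.1 hdisj (sphere_subset_closedBall hz) hj

lemma injective_circles (h : IsSemiclassicalSwissCheese z₀ R c ρ) :
    Function.Injective fun k : Option ι => (k.elim z₀ c, k.elim R ρ) := by
  have houter : ∀ i, (z₀, R) ≠ (c i, ρ i) := fun i heq => by
    obtain ⟨hc, hρ⟩ := Prod.mk.inj heq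
    exact (h.closedBall_ssubset i).ne (by rw [hc, hρ])
  rintro (_ | i) (_ | j) heq
  · rfl
  · exact absurd heq (houter j)
  · exact absurd heq.symm (houter i)
  · obtain ⟨hc, hρ⟩ : c i = c j ∧ ρ i = ρ j := Prod.mk.inj heq
    by_contra hij
    have hdisj := h.disjoint i j fun hij' => hij (congrArg some hij')
    rw [← hc, ← hρ, disjoint_self] at hdisj
    exact (nonempty_ball.2 (h.radius_pos i)).ne_empty hdisj

lemma hasSum_winding_holes (h : IsSemiclassicalSwissCheese z₀ R c ρ) {a : ℂ}
    (ha : a ∉ swissCheeseSet z₀ R c ρ) :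
    HasSum (fun i => (ball (c i) (ρ i)).indicator (fun _ => (-1 : ℂ)) a)
      (-(ball z₀ R).indicator (fun _ => 1) a) := by
  by_cases hole : ∃ i, a ∈ ball (c i) (ρ i)
  · obtain ⟨i, hi⟩ := hole
    have hother : ∀ j ≠ i, (ball (c j) (ρ j)).indicator (fun _ => (-1 : ℂ)) a = 0 := fun j hji =>
      indicator_of_notMem (disjoint_left.1 (h.disjoint i j hji.symm) hi) _
    simpa only [indicator_of_mem hi, indicator_of_mem (h.ball_subset_ball i hi)]
      using hasSum_single i hother
  · have hout : a ∉ ball z₀ R := fun hmem =>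
      ha ⟨ball_subset_closedBall hmem, mt mem_iUnion.1 hole⟩
    simpa only [indicator_of_notMem hout, indicator_of_notMem (not_exists.1 hole _), neg_zero]
      using hasSum_zero

/-- The index `none` stands for the outer circle and `some i` for the boundary of the hole `i`. -/
theorem isNullCycle (h : IsSemiclassicalSwissCheese z₀ R c ρ) :
    IsNullCycle (swissCheeseSet z₀ R c ρ) (fun k : Option ι => k.elim z₀ c) (fun k => k.elim R ρ)
      (fun k => k.elim 1 fun _ => -1) where
  radius_pos := Option.rec h.outer_radius_pos h.radius_pos
  weight_ne_zero := Option.rec one_ne_zero fun _ => neg_ne_zero.2 one_ne_zero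
  injective := h.injective_circles
  sphere_subset := Option.rec h.outer_sphere_subset h.sphere_subset
  summable := by
    refine (hasSum_option (a := ∑' i, ρ i) ?_).summable
    simpa using h.summable.hasSum
  hasSum_winding a ha := by
    rw [← neg_add_cancel ((ball z₀ R).indicator (fun _ => (1 : ℂ)) a)]
    exact hasSum_option (h.hasSum_winding_holes ha)

theorem exists_notMem_closure_rationalFunctions [Countable ι]
    (h : IsSemiclassicalSwissCheese z₀ R c ρ) {O : Set ℂ} (hO : IsOpen O)
    (hne : (swissCheeseSet z₀ R c ρ ∩ O).Nonempty) :
    ∃ f ∉ closure (rationalFunctions (swissCheeseSet z₀ R c ρ)),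
      ∀ x : swissCheeseSet z₀ R c ρ, (x : ℂ) ∉ O → f x = 0 := by
  by_cases hmeet : ∃ k : Option ι, (sphere (k.elim z₀ c) (k.elim R ρ) ∩ O).Nonempty
  · obtain ⟨k, hk⟩ := hmeet
    exact h.isNullCycle.exists_notMem_closure_rationalFunctions hO hk
  obtain ⟨x, hx, hxO⟩ := hne
  obtain ⟨δ, hδ, hball⟩ := Metric.isOpen_iff.1 hO x hxO
  have hδX : ball x δ ⊆ swissCheeseSet z₀ R c ρ :=
    ball_subset_swissCheeseSet_of_disjoint hx hδ fun k =>
      disjoint_left.2 fun z hz hzk => hmeet ⟨k, z, hzk, hball hz⟩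
  have hδ2 : 0 < δ / 2 := half_pos hδ
  have hsmall : closedBall x (δ / 2) ⊆ ball x δ := closedBall_subset_ball (half_lt_self hδ)
  have hcircle : (sphere x (δ / 2) ∩ O).Nonempty :=
    (NormedSpace.sphere_nonempty.2 hδ2.le).mono fun z hz =>
      ⟨hz, hball (hsmall (sphere_subset_closedBall hz))⟩
  exact (isNullCycle_of_closedBall_subset hδ2
    (hsmall.trans hδX)).exists_notMem_closure_rationalFunctions hO (k := ()) hcircle

end IsSemiclassicalSwissCheese

end SwissCheese

theorem semiclassical_RX_essential {ι : Type} [Countable ι]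
    (z0 : ℂ) (R : ℝ) (c : ι → ℂ) (ρ : ι → ℝ) (hR : 0 < R) (hρ : ∀ i, 0 < ρ i)
    (hdisj : ∀ i j, i ≠ j → Disjoint (ball (c i) (ρ i)) (ball (c j) (ρ j)))
    (hsub : ∀ i, ball (c i) (ρ i) ⊆ closedBall z0 R)
    (hproper : ∀ i, closedBall (c i) (ρ i) ⊂ closedBall z0 R)
    (hsum : Summable ρ)
    (X : Set ℂ) (hX : X = closedBall z0 R \ ⋃ i, ball (c i) (ρ i))
    (RX : Set C(X, ℂ))
    (hRX : RX = closure {f : C(X, ℂ) | ∃ p q : Polynomial ℂ,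
      (∀ x : X, q.eval (x : ℂ) ≠ 0) ∧ ∀ x : X, f x = p.eval (x : ℂ) / q.eval (x : ℂ)}) :
    RX ≠ Set.univ ∧
      ∀ Y : Set X, IsClosed Y → Y.Nonempty → Y ≠ Set.univ →
        ∃ f : C(X, ℂ), f ∉ RX ∧ ∀ y ∈ Y, f y = 0 := by
  have hcheese : IsSemiclassicalSwissCheese z0 R c ρ := ⟨hR, hρ, hdisj, hproper, hsum⟩
  have hXcheese : X = swissCheeseSet z0 R c ρ := hX
  have hRXcl : RX = closure (rationalFunctions X) := hRX
  clear hX hRX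
  subst hXcheese hRXcl
  constructor
  · obtain ⟨z, hz⟩ := NormedSpace.sphere_nonempty (x := z0) (r := R).2 hR.le
    obtain ⟨f, hf, -⟩ := hcheese.exists_notMem_closure_rationalFunctions isOpen_univ
      ⟨z, hcheese.outer_sphere_subset hz, mem_univ z⟩
    exact (ne_univ_iff_exists_notMem _).2 ⟨f, hf⟩
  · intro Y hY _ hYne
    obtain ⟨x, hx⟩ := (ne_univ_iff_exists_notMem Y).1 hYne
    obtain ⟨O, hO, hOY⟩ := isOpen_induced_iff.1 hY.isOpen_compl
    have hmem : ∀ y : swissCheeseSet z0 R c ρ, (y : ℂ) ∈ O ↔ y ∉ Y := Set.ext_iff.1 hOY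
    obtain ⟨f, hf, hfO⟩ := hcheese.exists_notMem_closure_rationalFunctions hO
      ⟨x, x.2, (hmem x).2 hx⟩
    exact ⟨f, hf, fun y hy => hfO y fun hyO => (hmem y).1 hyO hy⟩
end
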